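/- For f(x) = x^s with s > 0 on the interval (0,b), the mean oscillation satisfies osc(f,(0,b)) = b^s · 2s/(1+s)^{2+1/s}, and the total variation satisfies (1/4)|Df|((0,b)) = b^s/4. Hence osc(f,(0,b)) = (1/4)|Df|((0,b)) if and only if 8s = (1+s)^{2+1/s}. -/

import Mathlib

open MeasureTheory Set Filter
open scoped ENNReal

/-- Mean oscillation of `f` over the interval `(x, y)`. -/
noncomputable def oscI (f : ℝ → ℝ) (x y : ℝ) : ℝ :=
  (y - x)⁻¹ * ∫ t in x..y, |f t - (y - x)⁻¹ * ∫ s in x..y, f s|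

/-- Total variation of the distributional derivative of `f` on `(x, y)`:
the supremum of `∫ f φ'` over smooth `φ` supported in `(x, y)` with `‖φ‖_∞ ≤ 1`. -/
noncomputable def varD (f : ℝ → ℝ) (x y : ℝ) : ℝ≥0∞ :=
  ⨆ φ : {φ : ℝ → ℝ // ContDiff ℝ (⊤ : ℕ∞) φ ∧ HasCompactSupport φ ∧
      tsupport φ ⊆ Set.Ioo x y ∧ ∀ t, |φ t| ≤ 1},
    ENNReal.ofReal (∫ t in x..y, f t * deriv (φ : ℝ → ℝ) t)

lemma aux_integral (s x y : ℝ) (hs : 0 < s) :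
    ∫ t in x..y, t ^ s = (y ^ (s + 1) - x ^ (s + 1)) / (s + 1) :=
  integral_rpow (Or.inl (by linarith))

lemma aux_osc (s b : ℝ) (hs : 0 < s) (hb : 0 < b) :
    oscI (fun x => x ^ s) 0 b = b ^ s * (2 * s / (1 + s) ^ ((2 : ℝ) + 1 / s)) := by
  have h1 : (0 : ℝ) < 1 + s := by linarith
  have hbs : 0 < b ^ s := Real.rpow_pos_of_pos hb s
  set K : ℝ := (1 + s) ^ (1 / s) with hK
  have hKpos : 0 < K := Real.rpow_pos_of_pos h1 _
  have hK1 : 1 ≤ K := Real.one_le_rpow (by linarith) (by positivity)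
  have hKs : K ^ s = 1 + s := by
    rw [hK, ← Real.rpow_mul h1.le, one_div, inv_mul_cancel₀ hs.ne', Real.rpow_one]
  have hpow : (1 + s) ^ ((2 : ℝ) + 1 / s) = (1 + s) ^ 2 * K := by
    rw [Real.rpow_add h1, Real.rpow_two]
  set X : ℝ := b / K with hX
  have hXpos : 0 < X := by positivity
  have hXb : X ≤ b := div_le_self hb.le hK1
  have hXs : X ^ s = b ^ s / (1 + s) := by
    rw [hX, Real.div_rpow hb.le hKpos.le, hKs]
  have hint : ∀ x y : ℝ, IntervalIntegrable (fun t : ℝ => t ^ s) volume x y := fun x y =>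
    intervalIntegral.intervalIntegrable_rpow' (by linarith)
  have hm : (b - 0)⁻¹ * ∫ t in (0 : ℝ)..b, t ^ s = X ^ s := by
    rw [aux_integral s 0 b hs, hXs, Real.zero_rpow (by linarith), Real.rpow_add hb, Real.rpow_one]
    rw [sub_zero, sub_zero]
    field_simp
    ring
  have hcont : Continuous (fun t : ℝ => |t ^ s - X ^ s|) :=
    ((Real.continuous_rpow_const hs.le).sub continuous_const).abs
  unfold oscI
  simp only [hm]
  rw [← intervalIntegral.integral_add_adjacent_intervals (b := X)
    (hcont.intervalIntegrable _ _) (hcont.intervalIntegrable _ _)]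
  have e1 : ∫ t in (0 : ℝ)..X, |t ^ s - X ^ s| = ∫ t in (0 : ℝ)..X, (X ^ s - t ^ s) := by
    apply intervalIntegral.integral_congr
    intro t ht
    rw [uIcc_of_le hXpos.le] at ht
    have := Real.rpow_le_rpow ht.1 ht.2 hs.le
    simp only
    rw [abs_of_nonpos (by linarith)]
    ring
  have e2 : ∫ t in X..b, |t ^ s - X ^ s| = ∫ t in X..b, (t ^ s - X ^ s) := by
    apply intervalIntegral.integral_congr
    intro t ht
    rw [uIcc_of_le hXb] at ht
    have := Real.rpow_le_rpow hXpos.le ht.1 hs.le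
    simp only
    rw [abs_of_nonneg (by linarith)]
  rw [e1, e2, intervalIntegral.integral_sub (by simp) (hint _ _),
    intervalIntegral.integral_sub (hint _ _) (by simp), aux_integral _ _ _ hs,
    aux_integral _ _ _ hs, Real.zero_rpow (by linarith), Real.rpow_add hb, Real.rpow_add hXpos,
    Real.rpow_one, Real.rpow_one, hXs, hpow]
  simp only [intervalIntegral.integral_const, smul_eq_mul, sub_zero]
  rw [hX]
  have h2 : s + 1 ≠ 0 := by linarith
  field_simp
  ring

lemma aux_parts (s b : ℝ) (hs : 0 < s) (hb : 0 < b) (φ : ℝ → ℝ)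
    (hφ : ContDiff ℝ (⊤ : ℕ∞) φ) (hsupp : tsupport φ ⊆ Set.Ioo 0 b) :
    ∫ t in (0 : ℝ)..b, t ^ s * deriv φ t = - ∫ t in (0 : ℝ)..b, s * t ^ (s - 1) * φ t := by
  have h0 : φ 0 = 0 := image_eq_zero_of_notMem_tsupport fun h => (hsupp h).1.ne rfl
  have hb0 : φ b = 0 := image_eq_zero_of_notMem_tsupport fun h => (hsupp h).2.ne rfl
  have hd : Continuous (deriv φ) := hφ.continuous_deriv (by simp)
  rw [intervalIntegral.integral_mul_deriv_eq_deriv_mul_of_hasDerivAt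
    (u := fun t : ℝ => t ^ s) (u' := fun t => s * t ^ (s - 1)) (v := φ) (v' := deriv φ)
    (Real.continuous_rpow_const hs.le).continuousOn hφ.continuous.continuousOn]
  · simp [h0, hb0]
  · intro x hx
    rw [min_eq_left hb.le] at hx
    exact Real.hasDerivAt_rpow_const (Or.inl hx.1.ne')
  · intro x _
    exact ((hφ.differentiable (by simp)) x).hasDerivAt
  · exact (intervalIntegral.intervalIntegrable_rpow' (by linarith)).const_mul s
  · exact hd.intervalIntegrable _ _

lemma aux_deriv_int (s x y : ℝ) (hs : 0 < s) :
    ∫ t in x..y, s * t ^ (s - 1) = y ^ s - x ^ s := by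
  rw [intervalIntegral.integral_const_mul, integral_rpow (Or.inl (by linarith)), sub_add_cancel]
  field_simp

lemma aux_var (s b : ℝ) (hs : 0 < s) (hb : 0 < b) :
    varD (fun x => x ^ s) 0 b = ENNReal.ofReal (b ^ s) := by
  have hint : ∀ x y : ℝ, IntervalIntegrable (fun t : ℝ => s * t ^ (s - 1)) volume x y :=
    fun x y => (intervalIntegral.intervalIntegrable_rpow' (by linarith)).const_mul s
  apply le_antisymm
  · unfold varD
    refine iSup_le ?_
    rintro ⟨φ, hφ, hc, hsupp, h1⟩
    apply ENNReal.ofReal_le_ofReal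
    simp only
    rw [aux_parts s b hs hb φ hφ hsupp, ← intervalIntegral.integral_neg]
    have := aux_deriv_int s 0 b hs
    rw [Real.zero_rpow hs.ne', sub_zero] at this
    rw [← this]
    apply intervalIntegral.integral_mono_on hb.le
    · exact ((hint 0 b).mul_continuousOn hφ.continuous.continuousOn).neg
    · exact hint 0 b
    · intro t ht
      have h2 : 0 ≤ s * t ^ (s - 1) := mul_nonneg hs.le (Real.rpow_nonneg ht.1 _)
      have h3 := (abs_le.1 (h1 t)).1
      nlinarith
  · have key : ∀ δ ∈ Set.Ioo 0 (b / 2),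
        ENNReal.ofReal ((b - δ) ^ s - δ ^ s) ≤ varD (fun x => x ^ s) 0 b := by
      intro δ hδ
      obtain ⟨hδ0, hδb⟩ := hδ
      let g : ContDiffBump (b / 2 : ℝ) :=
        { rIn := b / 2 - δ, rOut := b / 2 - δ / 2, rIn_pos := by linarith,
          rIn_lt_rOut := by linarith }
      have hts : tsupport (fun t => - g t) ⊆ Set.Ioo 0 b := by
        intro t ht
        have ht' : t ∈ tsupport g := by
          have : tsupport (fun t => - g t) = tsupport g := by
            simp [tsupport, Function.support]
          rwa [this] at ht
        rw [g.tsupport_eq, Real.closedBall_eq_Icc] at ht'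
        have e : g.rOut = b / 2 - δ / 2 := rfl
        rw [e] at ht'
        constructor <;> linarith [ht'.1, ht'.2]
      have hsm : ContDiff ℝ (⊤ : ℕ∞) (fun t => - g t) := g.contDiff.neg
      have hcs : HasCompactSupport (fun t => - g t) := g.hasCompactSupport.neg
      unfold varD
      refine le_iSup_of_le ⟨fun t => - g t, hsm, hcs, hts, fun t => ?_⟩ ?_
      · rw [abs_neg, abs_of_nonneg g.nonneg]
        exact g.le_one
      apply ENNReal.ofReal_le_ofReal
      simp only
      rw [aux_parts s b hs hb _ hsm hts, ← intervalIntegral.integral_neg,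
        ← aux_deriv_int s δ (b - δ) hs]
      have e : ∫ t in δ..(b - δ), s * t ^ (s - 1)
          = ∫ t in δ..(b - δ), -(s * t ^ (s - 1) * - g t) := by
        apply intervalIntegral.integral_congr
        intro t ht
        rw [uIcc_of_le (by linarith)] at ht
        have : g t = 1 := by
          apply g.one_of_mem_closedBall
          rw [Real.closedBall_eq_Icc]
          have e : g.rIn = b / 2 - δ := rfl
          rw [e]
          constructor <;> linarith [ht.1, ht.2]
        simp [this]
      rw [e]
      apply intervalIntegral.integral_mono_interval hδ0.le (by linarith) (by linarith)
      · refine (ae_restrict_iff' measurableSet_Ioc).2 (Eventually.of_forall fun t ht => ?_)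
        have h2 : 0 ≤ s * t ^ (s - 1) := mul_nonneg hs.le (Real.rpow_nonneg ht.1.le _)
        have h3 : 0 ≤ g t := g.nonneg
        simp only [Pi.zero_apply]
        nlinarith
      · exact ((hint 0 b).mul_continuousOn hsm.continuous.continuousOn).neg
    have hlim : Tendsto (fun δ : ℝ => ENNReal.ofReal ((b - δ) ^ s - δ ^ s))
        (nhdsWithin 0 (Set.Ioi 0)) (nhds (ENNReal.ofReal (b ^ s))) := by
      have hc : Continuous (fun δ : ℝ => ENNReal.ofReal ((b - δ) ^ s - δ ^ s)) := by
        apply ENNReal.continuous_ofReal.comp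
        exact ((Real.continuous_rpow_const hs.le).comp (continuous_const.sub continuous_id)).sub
          (Real.continuous_rpow_const hs.le)
      have := (hc.tendsto 0).mono_left (nhdsWithin_le_nhds (s := Set.Ioi 0))
      simpa [Real.zero_rpow hs.ne'] using this
    refine le_of_tendsto hlim ?_
    filter_upwards [Ioo_mem_nhdsGT (show (0 : ℝ) < b / 2 by linarith)] with δ hδ
    exact key δ hδ

/-- For `f(x) = x^s` with `s > 0` on `(0, b)`: `osc(f,(0,b)) = b^s · 2s/(1+s)^{2+1/s}` and
`|Df|((0,b)) = b^s`; hence the identity `osc = (1/4)|Df|` holds on `(0,b)` iff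
`8s = (1+s)^{2+1/s}`. -/
theorem power_osc_formula (s b : ℝ) (hs : 0 < s) (hb : 0 < b) :
    oscI (fun x => x ^ s) 0 b = b ^ s * (2 * s / (1 + s) ^ ((2 : ℝ) + 1 / s)) ∧
    varD (fun x => x ^ s) 0 b = ENNReal.ofReal (b ^ s) ∧
    (varD (fun x => x ^ s) 0 b
        = 4 * ENNReal.ofReal (oscI (fun x => x ^ s) 0 b) ↔
      8 * s = (1 + s) ^ ((2 : ℝ) + 1 / s)) := by
  refine ⟨aux_osc s b hs hb, aux_var s b hs hb, ?_⟩
  rw [aux_osc s b hs hb, aux_var s b hs hb]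
  have hbs : 0 < b ^ s := Real.rpow_pos_of_pos hb s
  have hP : 0 < (1 + s) ^ ((2 : ℝ) + 1 / s) := Real.rpow_pos_of_pos (by linarith) _
  set P := (1 + s) ^ ((2 : ℝ) + 1 / s)
  have h4 : (4 : ℝ≥0∞) = ENNReal.ofReal 4 := by simp
  rw [h4, ← ENNReal.ofReal_mul (by norm_num),
    ENNReal.ofReal_eq_ofReal_iff hbs.le (by positivity)]
  constructor
  · intro h
    field_simp at h
    linarith
  · intro h
    rw [← h]
    field_simp
    norm_num
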